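/- Let P be a consensus matrix with invariant measure π and let C_{P*P} := n PᵀΠP. Then the LQ cost satisfies J(P) ≤ (π_max³ n² / π_min) · R̄(C_{P*P}) and the weighted LQ cost satisfies J_w(P) ≤ π_max³ n³ · R̄(C_{P*P}). -/

import Mathlib

open Matrix

/-- A consensus matrix: entrywise nonnegative, row-stochastic, irreducible
(for every pair of indices some power has a positive entry), with positive diagonal. -/
def IsConsensus {n : ℕ} (P : Matrix (Fin n) (Fin n) ℝ) : Prop :=
  (∀ i j, 0 ≤ P i j) ∧ (∀ i, (∑ j, P i j) = 1) ∧
  (∀ i j, ∃ k : ℕ, 0 < (P ^ k) i j) ∧ (∀ i, 0 < P i i)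

/-- `mu` is the invariant measure of `P`: strictly positive, sums to `1`,
and is a left fixed vector of `P`. -/
def IsInvMeasure {n : ℕ} (P : Matrix (Fin n) (Fin n) ℝ) (mu : Fin n → ℝ) : Prop :=
  (∀ i, 0 < mu i) ∧ (∑ i, mu i) = 1 ∧ (∀ j, (∑ i, mu i * P i j) = mu j)

/-- The time reversal `P* = Π⁻¹ Pᵀ Π` with `Π = diag(mu)`. -/
noncomputable def Pstar {n : ℕ} (P : Matrix (Fin n) (Fin n) ℝ) (mu : Fin n → ℝ) :
    Matrix (Fin n) (Fin n) ℝ :=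
  Matrix.diagonal (fun i => (mu i)⁻¹) * Pᵀ * Matrix.diagonal mu

/-- The graph Laplacian `L(C) = diag(C 𝟙) − C`. -/
def lap {n : ℕ} (C : Matrix (Fin n) (Fin n) ℝ) : Matrix (Fin n) (Fin n) ℝ :=
  Matrix.diagonal (fun i => ∑ j, C i j) - C

/-- A conductance matrix: symmetric, entrywise nonnegative, irreducible. -/
def IsConductance {n : ℕ} (C : Matrix (Fin n) (Fin n) ℝ) : Prop :=
  Cᵀ = C ∧ (∀ i j, 0 ≤ C i j) ∧ (∀ i j, ∃ k : ℕ, 0 < (C ^ k) i j)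

/-- The effective resistance between `a` and `b`: `v a - v b` for a solution `v`
of `L(C) v = e_a - e_b` (junk value `0` if no solution exists). -/
noncomputable def effRes {n : ℕ} (C : Matrix (Fin n) (Fin n) ℝ) (a b : Fin n) : ℝ :=
  open Classical in
  if h : ∃ v : Fin n → ℝ, lap C *ᵥ v = Pi.single a 1 - Pi.single b 1 then
    h.choose a - h.choose b
  else 0

/-- The average effective resistance `(1/(2 n²)) Σ_{u,v} R_{uv}(C)`. -/
noncomputable def avgRes {n : ℕ} (C : Matrix (Fin n) (Fin n) ℝ) : ℝ :=
  (1 / (2 * (n : ℝ) ^ 2)) * ∑ u, ∑ v, effRes C u v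

/-- The unit-conductance matrix of the undirected graph associated with `P`:
edge `{u,v}` iff `P u v ≠ 0` or `P v u ≠ 0`. -/
noncomputable def adjMat {n : ℕ} (P : Matrix (Fin n) (Fin n) ℝ) : Matrix (Fin n) (Fin n) ℝ :=
  Matrix.of fun i j => if i ≠ j ∧ (P i j ≠ 0 ∨ P j i ≠ 0) then (1 : ℝ) else 0

/-- The LQ cost `J(P) = (1/n) Σ_{t≥0} ‖P^t − 𝟙 muᵀ‖_F²`. -/
noncomputable def LQcost {n : ℕ} (P : Matrix (Fin n) (Fin n) ℝ) (mu : Fin n → ℝ) : ℝ :=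
  (1 / (n : ℝ)) *
    ∑' t : ℕ, ∑ i, ∑ j,
      ((P ^ t - Matrix.vecMulVec (fun _ => 1) mu : Matrix (Fin n) (Fin n) ℝ) i j) ^ 2

/-- The weighted LQ cost `J_w(P)`. -/
noncomputable def LQcostW {n : ℕ} (P : Matrix (Fin n) (Fin n) ℝ) (mu : Fin n → ℝ) : ℝ :=
  ∑' t : ℕ, Matrix.trace ((1 - Matrix.vecMulVec mu (fun _ => 1)) * Pᵀ ^ t *
    Matrix.diagonal mu * P ^ t * (1 - Matrix.vecMulVec (fun _ => 1) mu))

/-- The Green matrix `G(P) = Σ_{t≥0} (P^t − 𝟙 muᵀ)`. -/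
noncomputable def Green {n : ℕ} (P : Matrix (Fin n) (Fin n) ℝ) (mu : Fin n → ℝ) :
    Matrix (Fin n) (Fin n) ℝ :=
  ∑' t : ℕ, (P ^ t - Matrix.vecMulVec (fun _ => 1) mu)

/-- Out-degree (excluding self-loops) of node `i` in the directed graph of `P`. -/
noncomputable def outDeg {n : ℕ} (P : Matrix (Fin n) (Fin n) ℝ) (i : Fin n) : ℕ :=
  (Finset.univ.filter fun j => j ≠ i ∧ P i j ≠ 0).card

/-- In-degree (excluding self-loops) of node `j` in the directed graph of `P`. -/
noncomputable def inDeg {n : ℕ} (P : Matrix (Fin n) (Fin n) ℝ) (j : Fin n) : ℕ :=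
  (Finset.univ.filter fun i => i ≠ j ∧ P i j ≠ 0).card

/-!
Put `Π = diag μ` and let `X_t = Pᵗ - 𝟙 μᵀ`, so that `X_s X_t = X_{s+t}`. Up to powers of the extreme
entries of `μ`, both costs are sums of the quantities `tr (Π X_t Π⁻¹ X_tᵀ)`. With `E = X_1`, the
partial sums `Y = 𝟙𝟙ᵀ + ∑_{t<m} X_t Π⁻¹ X_tᵀ` telescope to `Π⁻¹ + E Y Eᵀ - Y = X_m Π⁻¹ X_mᵀ ≥ 0`.
Completing a square shows that every positive semidefinite `Y` with `Π⁻¹ + E Y Eᵀ - Y ≥ 0`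
satisfies `tr (Π Y) ≤ tr (Π W⁻¹)`, where `W = Π - Eᵀ Π E`; working with finite partial sums, no
convergence of the series has to be known beforehand. Finally `n W` is the Laplacian of the network
`n Pᵀ Π P` plus the rank-one matrix `n μ μᵀ`, and the inverse of a regularized Laplacian computes
effective resistances: `tr (Π W⁻¹) - 1` is `n / 2` times their `μ`-weighted sum over all pairs.
-/

section Preliminaries

variable {ι α : Type*} [Fintype ι]

open scoped MatrixOrder in
theorem trace_mul_nonneg_of_posSemidef {A B : Matrix ι ι ℝ} (hA : A.PosSemidef)
    (hB : B.PosSemidef) : 0 ≤ trace (A * B) := by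
  classical
  obtain ⟨F, rfl⟩ := CStarAlgebra.nonneg_iff_eq_star_mul_self.mp hA.nonneg
  rw [star_eq_conjTranspose, Matrix.mul_assoc, trace_mul_comm]
  exact (hB.mul_mul_conjTranspose_same F).trace_nonneg

theorem diagonal_mulVec_one [NonAssocSemiring α] [DecidableEq ι] (w : ι → α) :
    diagonal w *ᵥ 1 = w := by
  ext i
  rw [mulVec_diagonal, Pi.one_apply, mul_one]

theorem trace_diagonal_mul_mul_diagonal_mul_transpose [CommSemiring α] [DecidableEq ι]
    (a b : ι → α) (X : Matrix ι ι α) :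
    trace (diagonal a * X * diagonal b * Xᵀ) = ∑ i, ∑ j, a i * b j * X i j ^ 2 := by
  simp only [trace, diag_apply, mul_apply (N := Xᵀ), mul_diagonal, diagonal_mul, transpose_apply]
  exact Finset.sum_congr rfl fun i _ => Finset.sum_congr rfl fun j _ => by ring

theorem transpose_mul_diagonal_mul_apply [CommSemiring α] [DecidableEq ι] (X : Matrix ι ι α)
    (w : ι → α) (i j : ι) : (Xᵀ * diagonal w * X) i j = ∑ k, w k * X k i * X k j := by
  simp only [mul_apply (N := X), mul_diagonal, transpose_apply, mul_comm (w _)]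

end Preliminaries

section Lyapunov

variable {ι α : Type*} [Fintype ι] [DecidableEq ι] [CommRing α]

-- `R` stands for `D⁻¹ + E Y Eᵀ - Y`. On the right, every trace is that of a product of two matrices
-- that are positive semidefinite as soon as `D`, `Y`, `R` and `D - Eᵀ D E` are.
theorem two_mul_trace_mul_sub_trace_mul {D E Y R G : Matrix ι ι α}
    (hY : D * (E * Y * Eᵀ) = D * Y + D * R - 1) (hG : (D - Eᵀ * D * E) * G = 1) :
    2 * (trace (D * G) - trace (D * Y)) =
      2 * trace (Eᵀ * D * E * ((Y - G) * (D - Eᵀ * D * E) * (Y - G))) +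
      trace ((D - Eᵀ * D * E) * ((Y - G) * (D - Eᵀ * D * E) * (Y - G))) +
      2 * trace (D * Y * D * R) + trace (D * R * D * R) := by
  set B := Eᵀ * D * E with hB
  have hG' : G * (D - B) = 1 := mul_eq_one_comm.mp hG
  have hDY : D * Y - B * Y = (D - B) * Y := (sub_mul D B Y).symm
  have hgap : (D - B) * (Y - G) = D * Y - B * Y - 1 := by rw [mul_sub, hG, hDY]
  have hW : (D - B) * ((Y - G) * (D - B) * (Y - G)) =
      (D * Y - B * Y - 1) * (D * Y - B * Y - 1) := by
    rw [← hgap]; simp only [Matrix.mul_assoc]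
  have hD : D * ((Y - G) * (D - B) * (Y - G)) =
      D * Y * (D * Y - B * Y) - D * Y - D * Y + D * G := by
    have : G * (D * Y - B * Y) = Y := by rw [hDY, ← Matrix.mul_assoc, hG', one_mul]
    rw [Matrix.mul_assoc (Y - G), hgap, sub_mul Y G, mul_sub G, this]
    noncomm_ring
  have hBY : trace (B * Y) = trace (D * Y + D * R - 1) := by
    rw [← hY, hB, Matrix.mul_assoc, Matrix.mul_assoc, trace_mul_comm]
    simp only [Matrix.mul_assoc]
  have hBYBY : trace (B * Y * (B * Y)) =
      trace ((D * Y + D * R - 1) * (D * Y + D * R - 1)) := by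
    rw [← hY, hB, Matrix.mul_assoc Eᵀ, Matrix.mul_assoc Eᵀ, Matrix.mul_assoc Eᵀ, trace_mul_comm Eᵀ]
    simp only [Matrix.mul_assoc]
  have hsplit (Z : Matrix ι ι α) : trace (B * Z) = trace (D * Z) - trace ((D - B) * Z) := by
    rw [sub_mul, trace_sub, sub_sub_cancel]
  rw [hsplit, hW, hD]
  simp only [mul_sub, sub_mul, mul_add, add_mul, mul_one, one_mul, trace_sub, trace_add,
    trace_one] at hBY hBYBY ⊢
  rw [trace_mul_comm (D * R) (D * Y)] at hBYBY
  rw [trace_mul_comm (B * Y) (D * Y)]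
  simp only [Matrix.mul_assoc] at hBY hBYBY ⊢
  linear_combination 2 * hBY + hBYBY

theorem trace_mul_le_trace_mul_inv {D E Y : Matrix ι ι ℝ} (hD : D.PosDef)
    (hW : (D - Eᵀ * D * E).PosDef) (hY : Y.PosSemidef)
    (hYE : (D⁻¹ + E * Y * Eᵀ - Y).PosSemidef) :
    trace (D * Y) ≤ trace (D * (D - Eᵀ * D * E)⁻¹) := by
  set G := (D - Eᵀ * D * E)⁻¹
  set R := D⁻¹ + E * Y * Eᵀ - Y with hR
  have hWG : (D - Eᵀ * D * E) * G = 1 := mul_nonsing_inv _ hW.det_pos.ne'.isUnit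
  have hDR : D * (E * Y * Eᵀ) = D * Y + D * R - 1 := by
    rw [hR, mul_sub, mul_add, mul_nonsing_inv _ hD.det_pos.ne'.isUnit]
    abel
  have hB : (Eᵀ * D * E).PosSemidef := hD.posSemidef.conjTranspose_mul_mul_same E
  have hH : (Y - G)ᴴ = Y - G := hY.isHermitian.sub hW.inv.isHermitian
  have hHWH : ((Y - G) * (D - Eᵀ * D * E) * (Y - G)).PosSemidef := by
    simpa only [hH] using hW.posSemidef.mul_mul_conjTranspose_same (Y - G)
  have hconj {Z : Matrix ι ι ℝ} (hZ : Z.PosSemidef) : (D * Z * D).PosSemidef := by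
    simpa only [hD.isHermitian.eq] using hZ.mul_mul_conjTranspose_same D
  linarith [two_mul_trace_mul_sub_trace_mul hDR hWG, trace_mul_nonneg_of_posSemidef hB hHWH,
    trace_mul_nonneg_of_posSemidef hW.posSemidef hHWH,
    trace_mul_nonneg_of_posSemidef (hconj hY) hYE, trace_mul_nonneg_of_posSemidef (hconj hYE) hYE]

end Lyapunov

section Deviation

variable {ι α : Type*} [Fintype ι] [DecidableEq ι] [CommRing α]

/-- The deviation `Pᵗ - 𝟙 μᵀ` of the `t`-th power of `P` from the rank-one matrix `𝟙 μᵀ`, which is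
its limit when `P` is a primitive stochastic matrix with invariant measure `μ`. -/
def deviation (P : Matrix ι ι α) (mu : ι → α) (t : ℕ) : Matrix ι ι α :=
  P ^ t - vecMulVec 1 mu

variable {P : Matrix ι ι α} {mu : ι → α}

theorem pow_mulVec_eq_self {x : ι → α} (hx : P *ᵥ x = x) (t : ℕ) : P ^ t *ᵥ x = x := by
  induction t with
  | zero => rw [pow_zero, one_mulVec]
  | succ t ih => rw [pow_succ, ← mulVec_mulVec, hx, ih]

theorem vecMul_pow_eq_self {x : ι → α} (hx : x ᵥ* P = x) (t : ℕ) : x ᵥ* P ^ t = x := by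
  rw [← mulVec_transpose, transpose_pow, pow_mulVec_eq_self (by rw [mulVec_transpose, hx])]

theorem deviation_mulVec_one (hP : P *ᵥ 1 = 1) (hmu : mu ⬝ᵥ 1 = 1) (t : ℕ) :
    deviation P mu t *ᵥ 1 = 0 := by
  rw [deviation, sub_mulVec, pow_mulVec_eq_self hP, vecMulVec_mulVec, hmu, MulOpposite.op_one,
    one_smul, sub_self]

theorem deviation_mul_deviation (hP : P *ᵥ 1 = 1) (hmuP : mu ᵥ* P = mu) (hmu : mu ⬝ᵥ 1 = 1)
    (s t : ℕ) : deviation P mu s * deviation P mu t = deviation P mu (s + t) := by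
  have hmu_dev : mu ᵥ* deviation P mu t = 0 := by
    rw [deviation, vecMul_sub, vecMul_pow_eq_self hmuP, vecMul_vecMulVec, hmu, one_smul, sub_self]
  rw [deviation, sub_mul, vecMulVec_mul, hmu_dev, vecMulVec_zero, sub_zero, deviation, mul_sub,
    mul_vecMulVec, pow_mulVec_eq_self hP, ← pow_add, deviation]

theorem transpose_deviation_one_mul_mul {D : Matrix ι ι α} (hD : D *ᵥ 1 = mu) (hDt : Dᵀ = D)
    (hmuP : mu ᵥ* P = mu) (hmu : mu ⬝ᵥ 1 = 1) :
    (deviation P mu 1)ᵀ * D * deviation P mu 1 = Pᵀ * D * P - vecMulVec mu mu := by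
  have hDl : 1 ᵥ* D = mu := by rw [← mulVec_transpose, hDt, hD]
  simp only [deviation, pow_one, transpose_sub, transpose_vecMulVec, sub_mul, mul_sub,
    mul_vecMulVec, vecMulVec_mul, vecMulVec_mulVec, ← mulVec_mulVec, hD, hDl, hmuP, hmu,
    mulVec_transpose, MulOpposite.op_one, one_smul]
  abel

theorem deviation_zero_mul_inv_mul_transpose {D : Matrix ι ι α} (hD : D *ᵥ 1 = mu) (hDt : Dᵀ = D)
    (hdet : IsUnit D.det) (hmu : mu ⬝ᵥ 1 = 1) :
    deviation P mu 0 * D⁻¹ * (deviation P mu 0)ᵀ = D⁻¹ - vecMulVec 1 1 := by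
  have hinv : D⁻¹ *ᵥ mu = 1 := by rw [← hD, mulVec_mulVec, nonsing_inv_mul _ hdet, one_mulVec]
  have hinv' : mu ᵥ* D⁻¹ = 1 := by rw [← mulVec_transpose, transpose_nonsing_inv, hDt, hinv]
  simp only [deviation, pow_zero, transpose_sub, transpose_one, transpose_vecMulVec, sub_mul,
    mul_sub, one_mul, mul_one, mul_vecMulVec, vecMulVec_mul, vecMulVec_mulVec,
    dotProduct_comm 1, hinv, hinv', hmu, MulOpposite.op_one, one_smul]
  abel

theorem deviation_one_mul_sum_mul_transpose (hP : P *ᵥ 1 = 1) (hmuP : mu ᵥ* P = mu)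
    (hmu : mu ⬝ᵥ 1 = 1) (S : Matrix ι ι α) (m : ℕ) :
    deviation P mu 1 *
        (∑ t ∈ Finset.range m, deviation P mu t * S * (deviation P mu t)ᵀ) *
        (deviation P mu 1)ᵀ =
      ∑ t ∈ Finset.range m, deviation P mu (t + 1) * S * (deviation P mu (t + 1))ᵀ := by
  rw [Finset.mul_sum, Finset.sum_mul]
  refine Finset.sum_congr rfl fun t _ => ?_
  rw [add_comm t, ← deviation_mul_deviation hP hmuP hmu, transpose_mul]
  simp only [Matrix.mul_assoc]

theorem inv_add_deviation_one_mul_mul_transpose_sub {D : Matrix ι ι α} (hP : P *ᵥ 1 = 1)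
    (hmuP : mu ᵥ* P = mu) (hmu : mu ⬝ᵥ 1 = 1) (hD : D *ᵥ 1 = mu) (hDt : Dᵀ = D)
    (hdet : IsUnit D.det) (m : ℕ) :
    D⁻¹ + deviation P mu 1 *
        (vecMulVec 1 1 + ∑ t ∈ Finset.range m, deviation P mu t * D⁻¹ * (deviation P mu t)ᵀ) *
        (deviation P mu 1)ᵀ -
      (vecMulVec 1 1 + ∑ t ∈ Finset.range m, deviation P mu t * D⁻¹ * (deviation P mu t)ᵀ) =
    deviation P mu m * D⁻¹ * (deviation P mu m)ᵀ := by
  have hzero := deviation_zero_mul_inv_mul_transpose (P := P) hD hDt hdet hmu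
  have htelescope := Finset.sum_range_sub
    (fun t => deviation P mu t * D⁻¹ * (deviation P mu t)ᵀ) m
  rw [Finset.sum_sub_distrib, hzero, sub_eq_iff_eq_add] at htelescope
  rw [mul_add, add_mul, mul_vecMulVec, deviation_mulVec_one hP hmu, zero_vecMulVec,
    Matrix.zero_mul, zero_add, deviation_one_mul_sum_mul_transpose hP hmuP hmu, htelescope]
  abel

end Deviation

theorem sum_trace_deviation_le {ι : Type*} [Fintype ι] [DecidableEq ι] {P D : Matrix ι ι ℝ}
    {mu : ι → ℝ} (hP : P *ᵥ 1 = 1) (hmuP : mu ᵥ* P = mu) (hmu : mu ⬝ᵥ 1 = 1) (hD : D.PosDef)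
    (hD1 : D *ᵥ 1 = mu) (hW : (D - (deviation P mu 1)ᵀ * D * deviation P mu 1).PosDef) (m : ℕ) :
    ∑ t ∈ Finset.range m, trace (D * deviation P mu t * D⁻¹ * (deviation P mu t)ᵀ) ≤
      trace (D * (D - (deviation P mu 1)ᵀ * D * deviation P mu 1)⁻¹) - 1 := by
  have hterm (t : ℕ) : (deviation P mu t * D⁻¹ * (deviation P mu t)ᵀ).PosSemidef :=
    hD.inv.posSemidef.mul_mul_conjTranspose_same _
  have hY : (vecMulVec 1 1 + ∑ t ∈ Finset.range m,
      deviation P mu t * D⁻¹ * (deviation P mu t)ᵀ).PosSemidef :=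
    (posSemidef_vecMulVec_self_star (1 : ι → ℝ)).add (posSemidef_sum _ fun t _ => hterm t)
  have hbound := trace_mul_le_trace_mul_inv hD hW hY (by
    rw [inv_add_deviation_one_mul_mul_transpose_sub hP hmuP hmu hD1 hD.isHermitian.eq
      hD.det_pos.ne'.isUnit]
    exact hterm m)
  rw [mul_add, mul_vecMulVec, hD1, trace_add, trace_vecMulVec, hmu, Finset.mul_sum,
    trace_sum] at hbound
  simp only [← Matrix.mul_assoc] at hbound
  linarith

section Irreducible

variable {ι α : Type*} [Fintype ι] [DecidableEq ι] [Semiring α] [LinearOrder α]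
  [IsStrictOrderedRing α] {A : Matrix ι ι α}

theorem exists_pow_apply_pos_iff_reflTransGen (hA : ∀ i j, 0 ≤ A i j) {i j : ι} :
    (∃ k : ℕ, 0 < (A ^ k) i j) ↔ Relation.ReflTransGen (fun i j => 0 < A i j) i j := by
  constructor
  · rintro ⟨k, hk⟩
    induction k generalizing j with
    | zero =>
      obtain rfl : i = j := by
        by_contra hij
        rw [pow_zero, one_apply_ne hij] at hk
        exact hk.false
      exact .refl
    | succ k ih =>
      rw [pow_succ, mul_apply] at hk
      obtain ⟨l, -, hl⟩ := Finset.exists_lt_of_sum_lt (Finset.sum_const_zero.trans_lt hk)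
      have hkl := pow_apply_nonneg hA k i l
      exact (ih (pos_of_mul_pos_left hl (hA l j))).tail (pos_of_mul_pos_right hl hkl)
  · intro h
    induction h with
    | refl => exact ⟨0, by rw [pow_zero, one_apply_eq]; exact one_pos⟩
    | @tail l j _ hlj ih =>
      obtain ⟨k, hk⟩ := ih
      refine ⟨k + 1, ?_⟩
      rw [pow_succ, mul_apply]
      exact Finset.sum_pos' (fun l _ => mul_nonneg (pow_apply_nonneg hA k i l) (hA l j))
        ⟨l, Finset.mem_univ l, mul_pos hk hlj⟩

end Irreducible

section Laplacian

variable {n : ℕ} {C : Matrix (Fin n) (Fin n) ℝ}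

theorem lap_eq_diagonal_sub (C : Matrix (Fin n) (Fin n) ℝ) : lap C = diagonal (C *ᵥ 1) - C := by
  have hrow : C *ᵥ 1 = fun i => ∑ j, C i j := funext fun i => dotProduct_one (C i)
  rw [lap, hrow]

theorem lap_mulVec_one : lap C *ᵥ 1 = 0 := by
  rw [lap_eq_diagonal_sub, sub_mulVec, diagonal_mulVec_one, sub_self]

theorem transpose_lap (hC : Cᵀ = C) : (lap C)ᵀ = lap C := by
  rw [lap, transpose_sub, diagonal_transpose, hC]

theorem dotProduct_lap_mulVec (hC : Cᵀ = C) (x : Fin n → ℝ) :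
    x ⬝ᵥ lap C *ᵥ x = (∑ i, ∑ j, C i j * (x i - x j) ^ 2) / 2 := by
  have hswap : ∑ i, ∑ j, C i j * x j ^ 2 = ∑ i, ∑ j, C i j * x i ^ 2 := by
    rw [Finset.sum_comm]
    exact Finset.sum_congr rfl fun i _ => Finset.sum_congr rfl fun j _ => by
      rw [← transpose_apply C, hC]
  have hquad : x ⬝ᵥ lap C *ᵥ x =
      ∑ i, ∑ j, C i j * x i ^ 2 - ∑ i, ∑ j, C i j * (x i * x j) := by
    rw [lap, sub_mulVec, dotProduct_sub]
    simp only [dotProduct, mulVec_diagonal]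
    simp only [mulVec, dotProduct, Finset.mul_sum, Finset.sum_mul]
    congr 1 <;> exact Finset.sum_congr rfl fun i _ => Finset.sum_congr rfl fun j _ => by ring
  have hsq : ∑ i, ∑ j, C i j * (x i - x j) ^ 2 =
      ∑ i, ∑ j, C i j * x i ^ 2 + ∑ i, ∑ j, C i j * x j ^ 2 -
        2 * ∑ i, ∑ j, C i j * (x i * x j) := by
    simp only [Finset.mul_sum, ← Finset.sum_add_distrib, ← Finset.sum_sub_distrib]
    exact Finset.sum_congr rfl fun i _ => Finset.sum_congr rfl fun j _ => by ring
  rw [hquad, hsq, hswap]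
  ring

/-- The Laplacian of `C` regularized by a rank-one term. It is nonsingular when `C` is a
conductance matrix, `0 < c` and `w` has nonzero sum, and then its inverse has the same voltage
differences as a pseudoinverse of the Laplacian. -/
def regLap (C : Matrix (Fin n) (Fin n) ℝ) (w : Fin n → ℝ) (c : ℝ) : Matrix (Fin n) (Fin n) ℝ :=
  lap C + c • vecMulVec w w

variable {w : Fin n → ℝ} {c : ℝ}

theorem regLap_mulVec (x : Fin n → ℝ) :
    regLap C w c *ᵥ x = lap C *ᵥ x + (c * (w ⬝ᵥ x)) • w := by
  rw [regLap, add_mulVec, smul_mulVec, vecMulVec_mulVec, op_smul_eq_smul, smul_smul]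

theorem dotProduct_regLap_mulVec (x : Fin n → ℝ) :
    x ⬝ᵥ regLap C w c *ᵥ x = x ⬝ᵥ lap C *ᵥ x + c * (w ⬝ᵥ x) ^ 2 := by
  rw [regLap_mulVec, dotProduct_add, dotProduct_smul, smul_eq_mul, dotProduct_comm x w]
  ring

theorem regLap_mulVec_one : regLap C w c *ᵥ 1 = (c * (w ⬝ᵥ 1)) • w := by
  rw [regLap_mulVec, lap_mulVec_one, zero_add]

theorem transpose_regLap (hC : Cᵀ = C) : (regLap C w c)ᵀ = regLap C w c := by
  rw [regLap, transpose_add, transpose_lap hC, transpose_smul, transpose_vecMulVec]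

namespace IsConductance

theorem dotProduct_lap_mulVec_nonneg (hC : IsConductance C) (x : Fin n → ℝ) :
    0 ≤ x ⬝ᵥ lap C *ᵥ x := by
  rw [dotProduct_lap_mulVec hC.1]
  exact div_nonneg (Finset.sum_nonneg fun i _ => Finset.sum_nonneg fun j _ =>
    mul_nonneg (hC.2.1 i j) (sq_nonneg _)) zero_le_two

theorem eq_of_dotProduct_lap_mulVec_eq_zero (hC : IsConductance C) {x : Fin n → ℝ}
    (hx : x ⬝ᵥ lap C *ᵥ x = 0) (i j : Fin n) : x i = x j := by
  have hterm (i j : Fin n) : 0 ≤ C i j * (x i - x j) ^ 2 :=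
    mul_nonneg (hC.2.1 i j) (sq_nonneg _)
  have hedge {i j : Fin n} (hij : 0 < C i j) : x i = x j := by
    rw [dotProduct_lap_mulVec hC.1, div_eq_zero_iff, or_iff_left two_ne_zero,
      Finset.sum_eq_zero_iff_of_nonneg fun i _ => Finset.sum_nonneg fun j _ => hterm i j] at hx
    have hrow := (Finset.sum_eq_zero_iff_of_nonneg fun j _ => hterm i j).mp
      (hx i (Finset.mem_univ i)) j (Finset.mem_univ j)
    exact sub_eq_zero.mp (pow_eq_zero_iff two_ne_zero |>.mp
      ((mul_eq_zero.mp hrow).resolve_left hij.ne'))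
  have hpath := (exists_pow_apply_pos_iff_reflTransGen hC.2.1).mp (hC.2.2 i j)
  induction hpath with
  | refl => rfl
  | tail _ hlj ih => exact ih.trans (hedge hlj)

theorem posDef_regLap (hC : IsConductance C) (hc : 0 < c) (hw : w ⬝ᵥ 1 ≠ 0) :
    (regLap C w c).PosDef := by
  refine .of_dotProduct_mulVec_pos (transpose_regLap hC.1) fun x hx => ?_
  rw [star_trivial, dotProduct_regLap_mulVec]
  have hlap := hC.dotProduct_lap_mulVec_nonneg x
  by_cases hzero : x ⬝ᵥ lap C *ᵥ x = 0
  · obtain ⟨i, hi⟩ := Function.ne_iff.mp hx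
    have hconst : x = x i • (1 : Fin n → ℝ) := by
      ext j
      rw [hC.eq_of_dotProduct_lap_mulVec_eq_zero hzero j i, Pi.smul_apply, Pi.one_apply,
        smul_eq_mul, mul_one]
    have hwx : w ⬝ᵥ x ≠ 0 := by
      rw [hconst, dotProduct_smul, smul_eq_mul]
      exact mul_ne_zero hi hw
    positivity
  · have := hlap.lt_of_ne' hzero
    positivity

theorem effRes_eq_of_lap_mulVec_eq (hC : IsConductance C) {a b : Fin n} {v : Fin n → ℝ}
    (hv : lap C *ᵥ v = Pi.single a 1 - Pi.single b 1) : effRes C a b = v a - v b := by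
  have hsol : ∃ v : Fin n → ℝ, lap C *ᵥ v = Pi.single a 1 - Pi.single b 1 := ⟨v, hv⟩
  have hker : lap C *ᵥ (hsol.choose - v) = 0 := by
    rw [mulVec_sub, hsol.choose_spec, hv, sub_self]
  have hconst := hC.eq_of_dotProduct_lap_mulVec_eq_zero
    (by rw [hker, dotProduct_zero] : (hsol.choose - v) ⬝ᵥ lap C *ᵥ (hsol.choose - v) = 0) a b
  rw [Pi.sub_apply, Pi.sub_apply] at hconst
  rw [effRes, dif_pos hsol]
  linarith

theorem lap_mulVec_regLap_inv_mulVec (hC : IsConductance C) (hc : 0 < c) (hw : w ⬝ᵥ 1 ≠ 0)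
    {e : Fin n → ℝ} (he : e ⬝ᵥ 1 = 0) : lap C *ᵥ ((regLap C w c)⁻¹ *ᵥ e) = e := by
  set v := (regLap C w c)⁻¹ *ᵥ e
  have hv : regLap C w c *ᵥ v = e := by
    rw [mulVec_mulVec, mul_nonsing_inv _ (hC.posDef_regLap hc hw).det_pos.ne'.isUnit, one_mulVec]
  have hwv : c * (w ⬝ᵥ 1) * (w ⬝ᵥ v) = 0 := by
    rw [← smul_eq_mul, ← smul_dotProduct, ← regLap_mulVec_one, ← vecMul_transpose,
      transpose_regLap hC.1, ← dotProduct_mulVec, hv, dotProduct_comm, he]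
  rw [regLap_mulVec, (mul_eq_zero.mp hwv).resolve_left (mul_ne_zero hc.ne' hw), mul_zero,
    zero_smul, add_zero] at hv
  exact hv

theorem effRes_eq (hC : IsConductance C) (hc : 0 < c) (hw : w ⬝ᵥ 1 ≠ 0) (a b : Fin n) :
    effRes C a b = (Pi.single a 1 - Pi.single b 1) ⬝ᵥ
      (regLap C w c)⁻¹ *ᵥ (Pi.single a 1 - Pi.single b 1) := by
  rw [hC.effRes_eq_of_lap_mulVec_eq (hC.lap_mulVec_regLap_inv_mulVec hc hw
    (by simp only [sub_dotProduct, single_one_dotProduct, Pi.one_apply, sub_self]))]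
  simp only [sub_dotProduct, single_one_dotProduct]

theorem effRes_nonneg (hC : IsConductance C) (a b : Fin n) : 0 ≤ effRes C a b := by
  have hw : (Pi.single a 1 : Fin n → ℝ) ⬝ᵥ 1 ≠ 0 := by
    rw [single_one_dotProduct, Pi.one_apply]
    exact one_ne_zero
  rw [hC.effRes_eq one_pos hw]
  exact (hC.posDef_regLap one_pos hw).inv.posSemidef.dotProduct_mulVec_nonneg _

theorem sum_mul_mul_effRes (hC : IsConductance C) (hc : 0 < c) (hw : w ⬝ᵥ 1 = 1) :
    ∑ a, ∑ b, w a * w b * effRes C a b = 2 * (trace (diagonal w * (regLap C w c)⁻¹) - c⁻¹) := by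
  have hw0 : w ⬝ᵥ 1 ≠ 0 := hw.trans_ne one_ne_zero
  set G := (regLap C w c)⁻¹ with hG
  have hGw : G *ᵥ w = c⁻¹ • 1 := by
    rw [eq_inv_smul_iff₀ hc.ne', ← mulVec_smul, ← mul_one c, ← hw, ← regLap_mulVec_one (C := C),
      mulVec_mulVec, nonsing_inv_mul _ (hC.posDef_regLap hc hw0).det_pos.ne'.isUnit, one_mulVec]
  have heff (a b : Fin n) : effRes C a b = G a a - G a b - G b a + G b b := by
    rw [hC.effRes_eq hc hw0]
    simp only [← hG, sub_dotProduct, mulVec_sub, single_one_dotProduct, Pi.sub_apply,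
      mulVec_single_one, col_apply]
    ring
  have hdiag : ∑ a, ∑ b, w a * w b * G a a = trace (diagonal w * G) := by
    simp only [trace, diag_apply, diagonal_mul]
    refine Finset.sum_congr rfl fun a _ => ?_
    rw [← Finset.sum_mul, ← Finset.mul_sum, ← dotProduct_one, hw, mul_one]
  have hcross : ∑ a, ∑ b, w a * w b * G a b = c⁻¹ := by
    calc ∑ a, ∑ b, w a * w b * G a b = w ⬝ᵥ G *ᵥ w := by
          simp only [dotProduct, mulVec, Finset.mul_sum]
          exact Finset.sum_congr rfl fun a _ => Finset.sum_congr rfl fun b _ => by ring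
      _ = c⁻¹ := by rw [hGw, dotProduct_smul, hw, smul_eq_mul, mul_one]
  have hswap (f : Fin n → Fin n → ℝ) :
      ∑ a, ∑ b, w a * w b * f b a = ∑ a, ∑ b, w a * w b * f a b := by
    rw [Finset.sum_comm]
    simp only [mul_comm (w _) (w _)]
  simp only [heff, mul_add, mul_sub, Finset.sum_add_distrib, Finset.sum_sub_distrib]
  rw [hswap G, hswap fun a _ => G a a, hdiag, hcross]
  ring

end IsConductance

theorem sum_effRes_eq : ∑ a, ∑ b, effRes C a b = 2 * (n : ℝ) ^ 2 * avgRes C := by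
  rcases Nat.eq_zero_or_pos n with rfl | hn
  · simp only [Finset.univ_eq_empty, Finset.sum_empty, Nat.cast_zero]
    ring
  · rw [avgRes]
    field_simp

theorem IsConductance.sum_mul_mul_effRes_le (hC : IsConductance C) {M : ℝ} (hw : ∀ i, 0 ≤ w i)
    (hM : ∀ i, w i ≤ M) :
    ∑ a, ∑ b, w a * w b * effRes C a b ≤ 2 * (n : ℝ) ^ 2 * M ^ 2 * avgRes C := by
  calc ∑ a, ∑ b, w a * w b * effRes C a b ≤ ∑ a, ∑ b, M ^ 2 * effRes C a b := by
        gcongr with a _ b _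
        · exact hC.effRes_nonneg a b
        · rw [sq]
          exact mul_le_mul (hM a) (hM b) (hw b) ((hw a).trans (hM a))
    _ = 2 * (n : ℝ) ^ 2 * M ^ 2 * avgRes C := by
        simp only [← Finset.mul_sum, sum_effRes_eq]
        ring

end Laplacian

section Consensus

variable {n : ℕ} {P : Matrix (Fin n) (Fin n) ℝ} {mu : Fin n → ℝ}

theorem IsConsensus.mulVec_one (hP : IsConsensus P) : P *ᵥ 1 = 1 := by
  ext i
  rw [mulVec, dotProduct_one, hP.2.1, Pi.one_apply]

theorem LQcostW_eq_tsum_deviation (hP : P *ᵥ 1 = 1) :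
    LQcostW P mu = ∑' t, ∑ i, ∑ j, mu i * deviation P mu t i j ^ 2 := by
  refine tsum_congr fun t => ?_
  have hdev : P ^ t * (1 - vecMulVec 1 mu) = deviation P mu t := by
    rw [mul_sub, mul_one, mul_vecMulVec, pow_mulVec_eq_self hP, deviation]
  have hdevT : (1 - vecMulVec mu 1) * Pᵀ ^ t = (deviation P mu t)ᵀ := by
    rw [← hdev, transpose_mul, transpose_pow, transpose_sub, transpose_one, transpose_vecMulVec]
  calc trace ((1 - vecMulVec mu 1) * Pᵀ ^ t * diagonal mu * P ^ t * (1 - vecMulVec 1 mu))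
      = trace ((deviation P mu t)ᵀ * (diagonal mu * deviation P mu t)) := by
        rw [hdevT, Matrix.mul_assoc _ (P ^ t), hdev, Matrix.mul_assoc]
    _ = trace (diagonal mu * deviation P mu t * diagonal 1 * (deviation P mu t)ᵀ) := by
        rw [trace_mul_comm, diagonal_one', mul_one]
    _ = ∑ i, ∑ j, mu i * deviation P mu t i j ^ 2 := by
        simp only [trace_diagonal_mul_mul_diagonal_mul_transpose, Pi.one_apply, mul_one]

namespace IsInvMeasure

theorem vecMul_eq (hmu : IsInvMeasure P mu) : mu ᵥ* P = mu :=
  funext hmu.2.2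

theorem dotProduct_one_eq_one (hmu : IsInvMeasure P mu) : mu ⬝ᵥ 1 = 1 := by
  rw [dotProduct_one, hmu.2.1]

theorem posDef_diagonal (hmu : IsInvMeasure P mu) : (diagonal mu).PosDef :=
  .diagonal hmu.1

theorem isConductance_smul_transpose_mul (hmu : IsInvMeasure P mu) (hP : IsConsensus P)
    {c : ℝ} (hc : 0 < c) : IsConductance (c • (Pᵀ * diagonal mu * P)) := by
  have hterm (i j k : Fin n) : 0 ≤ mu k * P k i * P k j :=
    mul_nonneg (mul_nonneg (hmu.1 k).le (hP.1 k i)) (hP.1 k j)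
  have hnonneg (i j : Fin n) : 0 ≤ (c • (Pᵀ * diagonal mu * P)) i j := by
    rw [Matrix.smul_apply, transpose_mul_diagonal_mul_apply, smul_eq_mul]
    exact mul_nonneg hc.le (Finset.sum_nonneg fun k _ => hterm i j k)
  have hedge {i j : Fin n} (hij : 0 < P i j) : 0 < (c • (Pᵀ * diagonal mu * P)) i j := by
    rw [Matrix.smul_apply, transpose_mul_diagonal_mul_apply, smul_eq_mul]
    exact mul_pos hc (Finset.sum_pos' (fun k _ => hterm i j k)
      ⟨i, Finset.mem_univ i, mul_pos (mul_pos (hmu.1 i) (hP.2.2.2 i)) hij⟩)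
  refine ⟨?_, hnonneg, fun i j => ?_⟩
  · simp only [transpose_smul, transpose_mul, transpose_transpose, diagonal_transpose,
      Matrix.mul_assoc]
  · rw [exists_pow_apply_pos_iff_reflTransGen hnonneg]
    exact Relation.ReflTransGen.mono (fun _ _ => hedge) _ _
      ((exists_pow_apply_pos_iff_reflTransGen hP.1).mp (hP.2.2.1 i j))

theorem smul_diagonal_sub_eq_regLap (hmu : IsInvMeasure P mu) (hP : IsConsensus P) (c : ℝ) :
    c • (diagonal mu - (deviation P mu 1)ᵀ * diagonal mu * deviation P mu 1) =
      regLap (c • (Pᵀ * diagonal mu * P)) mu c := by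
  have hrow : (Pᵀ * diagonal mu * P) *ᵥ 1 = mu := by
    rw [← mulVec_mulVec, hP.mulVec_one, ← mulVec_mulVec, diagonal_mulVec_one, mulVec_transpose,
      hmu.vecMul_eq]
  rw [transpose_deviation_one_mul_mul (diagonal_mulVec_one mu) (diagonal_transpose mu)
    hmu.vecMul_eq hmu.dotProduct_one_eq_one, regLap, lap_eq_diagonal_sub, smul_mulVec, hrow,
    diagonal_smul, ← smul_sub, ← smul_add, sub_sub_eq_add_sub, add_sub_right_comm]

theorem posDef_diagonal_sub (hmu : IsInvMeasure P mu) (hP : IsConsensus P) :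
    (diagonal mu - (deviation P mu 1)ᵀ * diagonal mu * deviation P mu 1).PosDef := by
  rw [← one_smul ℝ (_ - _), hmu.smul_diagonal_sub_eq_regLap hP]
  exact (hmu.isConductance_smul_transpose_mul hP one_pos).posDef_regLap one_pos
    (hmu.dotProduct_one_eq_one.trans_ne one_ne_zero)

theorem trace_diagonal_mul_inv_sub_one (hmu : IsInvMeasure P mu) (hP : IsConsensus P) {c : ℝ}
    (hc : 0 < c) :
    trace (diagonal mu *
        (diagonal mu - (deviation P mu 1)ᵀ * diagonal mu * deviation P mu 1)⁻¹) - 1 =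
      c / 2 * ∑ a, ∑ b, mu a * mu b * effRes (c • (Pᵀ * diagonal mu * P)) a b := by
  have hW := (hmu.posDef_diagonal_sub hP).det_pos.ne'.isUnit
  have hinv : (c • (diagonal mu - (deviation P mu 1)ᵀ * diagonal mu * deviation P mu 1))⁻¹ =
      c⁻¹ • (diagonal mu - (deviation P mu 1)ᵀ * diagonal mu * deviation P mu 1)⁻¹ :=
    inv_smul' _ (Units.mk0 c hc.ne') hW
  rw [(hmu.isConductance_smul_transpose_mul hP hc).sum_mul_mul_effRes hc hmu.dotProduct_one_eq_one,
    ← hmu.smul_diagonal_sub_eq_regLap hP, hinv, Matrix.mul_smul, trace_smul, smul_eq_mul]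
  field_simp

theorem card_pos (hmu : IsInvMeasure P mu) : 0 < n := by
  rw [Nat.pos_iff_ne_zero]
  rintro rfl
  exact zero_ne_one (Finset.sum_empty.symm.trans hmu.2.1)

theorem sum_sum_sum_deviation_le (hmu : IsInvMeasure P mu) (hP : IsConsensus P) {M : ℝ}
    (hM : ∀ i, mu i ≤ M) (m : ℕ) :
    ∑ t ∈ Finset.range m, ∑ i, ∑ j, mu i * (mu j)⁻¹ * deviation P mu t i j ^ 2 ≤
      M ^ 2 * (n : ℝ) ^ 3 * avgRes ((n : ℝ) • (Pᵀ * diagonal mu * P)) := by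
  have hn : (0 : ℝ) < n := Nat.cast_pos.mpr hmu.card_pos
  have hinv : (diagonal mu)⁻¹ = diagonal fun j => (mu j)⁻¹ := by
    refine inv_eq_right_inv ?_
    simp only [diagonal_mul_diagonal, mul_inv_cancel₀ (hmu.1 _).ne', diagonal_one]
  calc ∑ t ∈ Finset.range m, ∑ i, ∑ j, mu i * (mu j)⁻¹ * deviation P mu t i j ^ 2
      = ∑ t ∈ Finset.range m,
          trace (diagonal mu * deviation P mu t * (diagonal mu)⁻¹ * (deviation P mu t)ᵀ) := by
        simp only [hinv, trace_diagonal_mul_mul_diagonal_mul_transpose]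
    _ ≤ trace (diagonal mu *
          (diagonal mu - (deviation P mu 1)ᵀ * diagonal mu * deviation P mu 1)⁻¹) - 1 :=
        sum_trace_deviation_le hP.mulVec_one hmu.vecMul_eq hmu.dotProduct_one_eq_one
          hmu.posDef_diagonal (diagonal_mulVec_one mu) (hmu.posDef_diagonal_sub hP) m
    _ = n / 2 * ∑ a, ∑ b, mu a * mu b * effRes ((n : ℝ) • (Pᵀ * diagonal mu * P)) a b :=
        hmu.trace_diagonal_mul_inv_sub_one hP hn
    _ ≤ n / 2 * (2 * (n : ℝ) ^ 2 * M ^ 2 * avgRes ((n : ℝ) • (Pᵀ * diagonal mu * P))) := by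
        gcongr
        exact (hmu.isConductance_smul_transpose_mul hP hn).sum_mul_mul_effRes_le
          (fun i => (hmu.1 i).le) hM
    _ = M ^ 2 * (n : ℝ) ^ 3 * avgRes ((n : ℝ) • (Pᵀ * diagonal mu * P)) := by ring

theorem tsum_sum_sum_deviation_le (hmu : IsInvMeasure P mu) (hP : IsConsensus P) {M K : ℝ}
    (hM : ∀ i, mu i ≤ M) (hK : 0 ≤ K) {w : Fin n → Fin n → ℝ} (hw : ∀ i j, 0 ≤ w i j)
    (hwK : ∀ i j, w i j ≤ K * (mu i * (mu j)⁻¹)) :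
    ∑' t, ∑ i, ∑ j, w i j * deviation P mu t i j ^ 2 ≤
      K * (M ^ 2 * (n : ℝ) ^ 3 * avgRes ((n : ℝ) • (Pᵀ * diagonal mu * P))) := by
  refine Real.tsum_le_of_sum_range_le (fun t => Finset.sum_nonneg fun i _ =>
    Finset.sum_nonneg fun j _ => mul_nonneg (hw i j) (sq_nonneg _)) fun m => ?_
  calc ∑ t ∈ Finset.range m, ∑ i, ∑ j, w i j * deviation P mu t i j ^ 2
      ≤ ∑ t ∈ Finset.range m, ∑ i, ∑ j,
          K * (mu i * (mu j)⁻¹) * deviation P mu t i j ^ 2 := by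
        gcongr
        exact hwK _ _
    _ = K * ∑ t ∈ Finset.range m, ∑ i, ∑ j,
          mu i * (mu j)⁻¹ * deviation P mu t i j ^ 2 := by
        simp only [Finset.mul_sum, mul_assoc]
    _ ≤ _ := mul_le_mul_of_nonneg_left (hmu.sum_sum_sum_deviation_le hP hM m) hK

theorem LQcost_le (hmu : IsInvMeasure P mu) (hP : IsConsensus P) {m M : ℝ} (hm0 : 0 < m)
    (hm : ∀ i, m ≤ mu i) (hM : ∀ i, mu i ≤ M) :
    LQcost P mu ≤ M ^ 3 * (n : ℝ) ^ 2 / m * avgRes ((n : ℝ) • (Pᵀ * diagonal mu * P)) := by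
  have hn : (0 : ℝ) < n := Nat.cast_pos.mpr hmu.card_pos
  have hM0 : 0 < M := (hmu.1 ⟨0, hmu.card_pos⟩).trans_le (hM _)
  have hweight (i j : Fin n) : 1 ≤ M / m * (mu i * (mu j)⁻¹) :=
    calc (1 : ℝ) = M / m * (m * M⁻¹) := by field_simp
      _ ≤ M / m * (mu i * (mu j)⁻¹) := by
        gcongr
        exacts [(hmu.1 i).le, hm i, hmu.1 j, hM j]
  calc LQcost P mu = 1 / n * ∑' t, ∑ i, ∑ j, 1 * deviation P mu t i j ^ 2 := by
        simp only [one_mul]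
        rfl
    _ ≤ 1 / n * (M / m * (M ^ 2 * (n : ℝ) ^ 3 * avgRes ((n : ℝ) • (Pᵀ * diagonal mu * P)))) := by
        gcongr
        exact hmu.tsum_sum_sum_deviation_le hP hM (by positivity) (fun _ _ => zero_le_one) hweight
    _ = M ^ 3 * (n : ℝ) ^ 2 / m * avgRes ((n : ℝ) • (Pᵀ * diagonal mu * P)) := by field_simp

theorem LQcostW_le (hmu : IsInvMeasure P mu) (hP : IsConsensus P) {M : ℝ}
    (hM : ∀ i, mu i ≤ M) :
    LQcostW P mu ≤ M ^ 3 * (n : ℝ) ^ 3 * avgRes ((n : ℝ) • (Pᵀ * diagonal mu * P)) := by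
  have hM0 : 0 < M := (hmu.1 ⟨0, hmu.card_pos⟩).trans_le (hM _)
  have hweight (i j : Fin n) : mu i ≤ M * (mu i * (mu j)⁻¹) := by
    rw [mul_left_comm, ← div_eq_mul_inv]
    exact le_mul_of_one_le_right (hmu.1 i).le ((one_le_div (hmu.1 j)).mpr (hM j))
  calc LQcostW P mu = ∑' t, ∑ i, ∑ j, mu i * deviation P mu t i j ^ 2 :=
        LQcostW_eq_tsum_deviation hP.mulVec_one
    _ ≤ M * (M ^ 2 * (n : ℝ) ^ 3 * avgRes ((n : ℝ) • (Pᵀ * diagonal mu * P))) :=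
        hmu.tsum_sum_sum_deviation_le hP hM hM0.le (fun i _ => (hmu.1 i).le) hweight
    _ = M ^ 3 * (n : ℝ) ^ 3 * avgRes ((n : ℝ) • (Pᵀ * diagonal mu * P)) := by ring

end IsInvMeasure

end Consensus

/-- Upper bounds on the LQ cost and weighted LQ cost via the average effective
resistance of `C_{P*P} = n PᵀΠP`. -/
theorem stmt9 {n : ℕ} (P : Matrix (Fin n) (Fin n) ℝ) (mu : Fin n → ℝ)
    (hP : IsConsensus P) (hmu : IsInvMeasure P mu)
    (mumin mumax : ℝ)
    (hmin : (∀ i, mumin ≤ mu i) ∧ ∃ i, mu i = mumin)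
    (hmax : (∀ i, mu i ≤ mumax) ∧ ∃ i, mu i = mumax) :
    LQcost P mu ≤ mumax ^ 3 * (n : ℝ) ^ 2 / mumin *
        avgRes ((n : ℝ) • (Pᵀ * Matrix.diagonal mu * P)) ∧
      LQcostW P mu ≤ mumax ^ 3 * (n : ℝ) ^ 3 *
        avgRes ((n : ℝ) • (Pᵀ * Matrix.diagonal mu * P)) := by
  have hmin0 : 0 < mumin := by
    obtain ⟨i, rfl⟩ := hmin.2
    exact hmu.1 i
  exact ⟨hmu.LQcost_le hP hmin0 hmin.1 hmax.1, hmu.LQcostW_le hP hmax.1⟩
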